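/- Let Z_1, …, Z_n be independent real-valued random variables, each bounded above by 1 almost surely. Then for any λ ∈ [0, 1/2], E[exp( λ Σ_{i=1}^n (E[Z_i] − Z_i) − λ² Σ_{i=1}^n Z_i² )] ≤ 1. -/

import Mathlib

open MeasureTheory ProbabilityTheory

/-!
Put `X = λ Z ≤ 1/2`. The elementary bound `exp (x - x²) ≤ 1 + x` for `x ≥ -1/2`, taken at `x = -X`,
gives `E[exp (-X - X²)] ≤ 1 - E[X] ≤ exp (-E[X])`, so each factor `exp (E[X] - X - X²)` has mean at
most `1`. Independence turns the mean of the product into the product of the means.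
-/

lemma exp_sub_sq_le_one_add {x : ℝ} (hx : -(1 / 2) ≤ x) : Real.exp (x - x ^ 2) ≤ 1 + x := by
  have one_add_nonneg : 0 ≤ 1 + x := by linarith
  suffices h : 1 ≤ (1 + x) * Real.exp (x ^ 2 - x) by
    rwa [← neg_sub, Real.exp_neg, inv_le_iff_one_le_mul₀ (Real.exp_pos _)]
  rcases le_total 0 x with hx_nonneg | hx_nonpos
  · calc
      1 ≤ 1 + x ^ 3 := le_add_of_nonneg_right (by positivity)
      _ = (1 + x) * (x ^ 2 - x + 1) := by ring
      _ ≤ (1 + x) * Real.exp (x ^ 2 - x) := by gcongr; exact Real.add_one_le_exp _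
  · have cubic_nonneg : 0 ≤ 1 + x - x ^ 2 + x ^ 3 := by
      nlinarith [mul_nonneg (neg_le_iff_add_nonneg.1 hx) (sq_nonneg x)]
    calc
      1 ≤ 1 + x ^ 2 * (1 + x - x ^ 2 + x ^ 3) / 2 := le_add_of_nonneg_right (by positivity)
      _ = (1 + x) * (1 + (x ^ 2 - x) + (x ^ 2 - x) ^ 2 / 2) := by ring
      _ ≤ (1 + x) * Real.exp (x ^ 2 - x) := by
        gcongr
        exact Real.quadratic_le_exp_of_nonneg (by nlinarith)

section

variable {Ω : Type*} [MeasurableSpace Ω] {μ : Measure Ω}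

lemma integral_exp_neg_sub_sq_le [IsProbabilityMeasure μ] {X : Ω → ℝ} (hX : Integrable X μ)
    (hX_le : ∀ᵐ ω ∂μ, X ω ≤ 1 / 2) :
    ∫ ω, Real.exp (-X ω - X ω ^ 2) ∂μ ≤ Real.exp (-∫ ω, X ω ∂μ) := by
  have exp_le : ∀ᵐ ω ∂μ, Real.exp (-X ω - X ω ^ 2) ≤ 1 - X ω := by
    filter_upwards [hX_le] with ω hω
    simpa only [neg_sq, ← sub_eq_add_neg] using exp_sub_sq_le_one_add (neg_le_neg hω)
  calc
    ∫ ω, Real.exp (-X ω - X ω ^ 2) ∂μ ≤ ∫ ω, (1 - X ω) ∂μ :=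
      integral_mono_of_nonneg (ae_of_all _ fun _ ↦ (Real.exp_pos _).le)
        ((integrable_const 1).sub hX) exp_le
    _ = 1 - ∫ ω, X ω ∂μ := by simp [integral_sub (integrable_const _) hX]
    _ ≤ Real.exp (-∫ ω, X ω ∂μ) := Real.one_sub_le_exp_neg _

lemma integral_exp_integral_sub_sub_sq_le_one [IsProbabilityMeasure μ] {X : Ω → ℝ}
    (hX : Integrable X μ) (hX_le : ∀ᵐ ω ∂μ, X ω ≤ 1 / 2) :
    ∫ ω, Real.exp ((∫ ω', X ω' ∂μ) - X ω - X ω ^ 2) ∂μ ≤ 1 := by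
  set m := ∫ ω', X ω' ∂μ
  calc
    ∫ ω, Real.exp (m - X ω - X ω ^ 2) ∂μ = Real.exp m * ∫ ω, Real.exp (-X ω - X ω ^ 2) ∂μ := by
      rw [← integral_const_mul]
      congr with ω
      rw [← Real.exp_add]
      ring_nf
    _ ≤ Real.exp m * Real.exp (-m) := by gcongr; exact integral_exp_neg_sub_sq_le hX hX_le
    _ = 1 := by rw [← Real.exp_add, add_neg_cancel, Real.exp_zero]

variable {ι : Type*} [Fintype ι]

lemma integrable_exp_sum_sub_sub_sq [IsFiniteMeasure μ] {X : ι → Ω → ℝ}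
    (hX : ∀ i, AEMeasurable (X i) μ) (c : ι → ℝ) :
    Integrable (fun ω ↦ Real.exp (∑ i, (c i - X i ω - X i ω ^ 2))) μ := by
  refine .of_bound (AEMeasurable.aestronglyMeasurable (by fun_prop))
    (Real.exp (∑ i, (c i + 1 / 4))) (ae_of_all _ fun ω ↦ ?_)
  rw [Real.norm_of_nonneg (Real.exp_pos _).le]
  gcongr with i
  linarith [sq_nonneg (X i ω + 1 / 2)]

theorem unexpected_bernstein_sum_mgf_general {Z : ι → Ω → ℝ} (hindep : iIndepFun Z μ)
    (hint : ∀ i, Integrable (Z i) μ) {lam : ℝ} (hle : ∀ i, ∀ᵐ ω ∂μ, lam * Z i ω ≤ 1 / 2) :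
    Integrable (fun ω ↦ Real.exp (lam * ∑ i, ((∫ ω', Z i ω' ∂μ) - Z i ω)
        - lam ^ 2 * ∑ i, Z i ω ^ 2)) μ ∧
      ∫ ω, Real.exp (lam * ∑ i, ((∫ ω', Z i ω' ∂μ) - Z i ω)
        - lam ^ 2 * ∑ i, Z i ω ^ 2) ∂μ ≤ 1 := by
  have := hindep.isProbabilityMeasure
  have hZ i : AEMeasurable (Z i) μ := (hint i).aemeasurable
  have exponent_eq ω : lam * ∑ i, ((∫ ω', Z i ω' ∂μ) - Z i ω) - lam ^ 2 * ∑ i, Z i ω ^ 2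
      = ∑ i, ((∫ ω', lam * Z i ω' ∂μ) - lam * Z i ω - (lam * Z i ω) ^ 2) := by
    simp only [integral_const_mul, mul_pow, ← mul_sub, Finset.mul_sum, ← Finset.sum_sub_distrib]
  simp_rw [exponent_eq]
  refine ⟨integrable_exp_sum_sub_sub_sq (fun i ↦ (hZ i).const_mul lam) _, ?_⟩
  calc
    ∫ ω, Real.exp (∑ i, ((∫ ω', lam * Z i ω' ∂μ) - lam * Z i ω - (lam * Z i ω) ^ 2)) ∂μ
      = ∏ i, ∫ ω, Real.exp ((∫ ω', lam * Z i ω' ∂μ) - lam * Z i ω - (lam * Z i ω) ^ 2) ∂μ := by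
        simp_rw [Real.exp_sum]
        exact hindep.integral_fun_prod_comp hZ
          (f := fun i z ↦ Real.exp ((∫ ω', lam * Z i ω' ∂μ) - lam * z - (lam * z) ^ 2))
          fun i ↦ Measurable.aestronglyMeasurable (by fun_prop)
    _ ≤ 1 := Finset.prod_le_one (fun i _ ↦ integral_nonneg fun ω ↦ (Real.exp_pos _).le)
        fun i _ ↦ integral_exp_integral_sub_sub_sq_le_one ((hint i).const_mul lam) (hle i)

end

/-- Let `Z_1, …, Z_n` be independent random variables, each bounded above by 1 almost
surely. Then for any `λ ∈ [0, 1/2]`,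
`E[exp(λ Σᵢ (E[Zᵢ] - Zᵢ) - λ² Σᵢ Zᵢ²)] ≤ 1`. -/
theorem unexpected_bernstein_sum_mgf
    {Ω : Type*} [MeasurableSpace Ω] (μ : Measure Ω) [IsProbabilityMeasure μ]
    (n : ℕ) (Z : Fin n → Ω → ℝ)
    (hZmeas : ∀ i, Measurable (Z i))
    (hindep : iIndepFun Z μ)
    (hZle : ∀ i, ∀ᵐ ω ∂μ, Z i ω ≤ 1)
    (lam : ℝ) (hlam : lam ∈ Set.Icc (0 : ℝ) (1/2))
    (hZint : ∀ i, Integrable (Z i) μ)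
    (hexpint : Integrable (fun ω =>
      Real.exp (lam * ∑ i, ((∫ ω', Z i ω' ∂μ) - Z i ω)
        - lam ^ 2 * ∑ i, Z i ω ^ 2)) μ) :
    ∫ ω, Real.exp (lam * ∑ i, ((∫ ω', Z i ω' ∂μ) - Z i ω)
        - lam ^ 2 * ∑ i, Z i ω ^ 2) ∂μ ≤ 1 :=
  (unexpected_bernstein_sum_mgf_general hindep hZint fun i ↦
    (hZle i).mono fun _ hω ↦ (mul_le_of_le_one_right hlam.1 hω).trans hlam.2).2
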